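/- arXiv:1512.03732 — 2 statements merged into one kernel-verified Lean document; each statement's English description precedes it below -/
import Mathlib

section
/- There exist a function ψ : ℕ → ℝ, monotonically nondecreasing with ψ(k) → ∞ and ψ(k) > 0 for all k, and a constant C > 0, such that for every k ∈ ℕ and every n ∈ ℕ with n·ψ(k) > k² one has (1/4)·binom(n + k/4, k) ≤ Q_k(n) ≤ C·binom(n + k/4, k). -/
open Finset

noncomputable section

/-- The generating set `S = {(1,0),(-1,0),(0,1),(0,-1)}` of ℤ². -/
def Sfin : Finset (ℤ × ℤ) := {(1,0), (-1,0), (0,1), (0,-1)}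

/-- `Q u n = E |u(S_n)|²` for the simple random walk on ℤ² started at 0. -/
noncomputable def Q (u : ℤ × ℤ → ℂ) (n : ℕ) : ℝ :=
  (4 : ℝ)⁻¹ ^ n * ∑ s ∈ Fintype.piFinset (fun _ : Fin n => Sfin), ‖u (∑ i, s i)‖ ^ 2

/-- Generalized binomial coefficient `binom(x,k) = (1/k!)·∏_{j<k}(x-j)`. -/
noncomputable def gbinom (x : ℝ) (k : ℕ) : ℝ :=
  (∏ j ∈ Finset.range k, (x - j)) / (Nat.factorial k)

/-- `F_k(x) = binom(x + (k-1)/2, k)`, a discretization of `x^k/k!`. -/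
noncomputable def F (k : ℕ) (x : ℝ) : ℝ := gbinom (x + ((k : ℝ) - 1) / 2) k

/-- `Z_k(x,y) = Σ_{l=0}^k i^l F_{k-l}(x) F_l(y)`, a harmonic discretization of `z^k/k!`. -/
noncomputable def Z (k : ℕ) (x y : ℝ) : ℂ :=
  ∑ l ∈ Finset.range (k + 1), Complex.I ^ l * (F (k - l) x : ℂ) * (F l y : ℂ)

/-- `Q_k := Q_{Z_k}` (with `Z_k` restricted to ℤ²). -/
noncomputable def Qk (k : ℕ) (n : ℕ) : ℝ := Q (fun p => Z k p.1 p.2) n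

/-!
The generating series `∑ₖ F_k(x) Xᵏ` is multiplied by a fixed power series `λ` when `x` increases
by `1`, so a step of the walk multiplies `∑ₖ Z_k Xᵏ` by a series depending on that step alone.
Hence `∑_{j,k} E[Z_j(S_n) conj Z_k(S_n)] tʲ uᵏ = Tⁿ W`, where `T` averages over the four steps,
`T = (1 + t u / 2)² + O(degree 6)` and `W = 1 + O(degree 1)`. The main part `(1 + t u / 2)²ⁿ`
contributes `binom(2n, k) / 2ᵏ` to `Q_k(n)`. Measuring the remainder in a weighted `ℓ¹` norm of
radius `r = 2 √(k / n)` shows that it is relatively of size `O(k³ / n²) + O(√(k / n))`. Finally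
`binom(2n, k) / 2ᵏ` and `binom(n + k / 4, k)` are comparable, because their factors `n - j / 2` and
`n + k / 4 - j` have the same mean over `j < k` up to `O(1)`, so that pairing `j` with `k - 1 - j`
cancels the first-order difference.
-/

section GeneralizedBinomial

lemma gbinom_zero (x : ℝ) : gbinom x 0 = 1 := by simp [gbinom]

lemma gbinom_succ (x : ℝ) (k : ℕ) :
    gbinom x (k + 1) = gbinom x k * ((x - k) / (k + 1)) := by
  rw [gbinom, gbinom, prod_range_succ, Nat.factorial_succ, div_mul_div_comm, mul_comm (k + 1)]
  push_cast
  rfl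

lemma gbinom_add_one_succ (x : ℝ) (k : ℕ) :
    gbinom (x + 1) (k + 1) = (x + 1) / (k + 1) * gbinom x k := by
  have hshift : ∏ j ∈ range k, (x + 1 - ((j + 1 : ℕ) : ℝ)) = ∏ j ∈ range k, (x - (j : ℝ)) :=
    prod_congr rfl fun j _ => by push_cast; ring
  rw [gbinom, gbinom, prod_range_succ', hshift, Nat.factorial_succ, div_mul_div_comm, mul_comm]
  push_cast
  rw [sub_zero]

lemma gbinom_pascal (x : ℝ) (k : ℕ) :
    gbinom (x + 1) (k + 1) = gbinom x (k + 1) + gbinom x k := by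
  rw [gbinom_add_one_succ, gbinom_succ]
  field_simp
  ring

lemma gbinom_reflect (x : ℝ) (k : ℕ) : gbinom (k - 1 - x) k = (-1) ^ k * gbinom x k := by
  have hreflect : ∏ j ∈ range k, ((k : ℝ) - 1 - x - (k - 1 - j : ℕ)) =
      ∏ j ∈ range k, -1 * (x - (j : ℝ)) := by
    refine prod_congr rfl fun j hj => ?_
    rw [Nat.sub_sub, Nat.cast_sub (by grind)]
    push_cast
    ring
  rw [gbinom, gbinom, ← prod_range_reflect, hreflect, prod_mul_distrib, prod_const, card_range,
    mul_div_assoc]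

lemma gbinom_eq_choose (x : ℝ) (k : ℕ) : gbinom x k = Ring.choose x k := by
  rw [Ring.choose_eq_smul, gbinom, ← descPochhammer_eval_eq_prod_range, div_eq_inv_mul,
    smul_eq_mul, ← Polynomial.aeval_eq_smeval, ← descPochhammer_map (Int.castRingHom ℝ),
    Polynomial.eval_map, Polynomial.aeval_def]
  rfl

lemma choose_div_two_pow_eq (n k : ℕ) :
    ((2 * n).choose k : ℝ) / 2 ^ k = (∏ j ∈ range k, ((n : ℝ) - j / 2)) / k.factorial := by
  have hprod :
      ∏ j ∈ range k, (((2 * n : ℕ) : ℝ) - j) = 2 ^ k * ∏ j ∈ range k, ((n : ℝ) - j / 2) := by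
    rw [pow_eq_prod_const, ← prod_mul_distrib]
    exact prod_congr rfl fun j _ => by push_cast; ring
  rw [Nat.cast_choose_eq_descPochhammer_div, descPochhammer_eval_eq_prod_range, hprod]
  field_simp

end GeneralizedBinomial

section DiscretePowers

lemma F_zero_left (x : ℝ) : F 0 x = 1 := gbinom_zero _

lemma F_neg (k : ℕ) (x : ℝ) : F k (-x) = (-1) ^ k * F k x := by
  rw [F, F, ← gbinom_reflect]
  congr 1
  ring

lemma F_succ_add_half (k : ℕ) (x : ℝ) : F (k + 1) (x + 1 / 2) = F (k + 1) (x - 1 / 2) + F k x := by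
  have hpascal := gbinom_pascal (x + (k - 1) / 2) k
  unfold F
  push_cast
  rw [show x + 1 / 2 + (k + 1 - 1) / 2 = x + (k - 1) / 2 + 1 by ring,
    show x - 1 / 2 + (k + 1 - 1) / 2 = x + (k - 1) / 2 by ring, hpascal]

lemma F_succ_half (k : ℕ) : F (k + 1) (1 / 2) = F k 0 / 2 := by
  have habsorb := gbinom_add_one_succ ((k - 1) / 2) k
  unfold F
  push_cast
  rw [zero_add, show (1 / 2 : ℝ) + (k + 1 - 1) / 2 = (k - 1) / 2 + 1 by ring, habsorb]
  field_simp
  ring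

lemma F_succ_succ_zero (k : ℕ) : F (k + 2) 0 = -((k + 1) / (4 * (k + 2))) * F k 0 := by
  have hhalf : F (k + 2) 0 = F (k + 1) (1 / 2) * ((1 / 2 + k / 2 - (k + 1)) / (k + 2)) := by
    unfold F
    rw [gbinom_succ]
    push_cast
    ring_nf
  rw [hhalf, F_succ_half]
  field_simp
  ring

lemma F_odd_zero (m : ℕ) : F (2 * m + 1) 0 = 0 := by
  have hodd := F_neg (2 * m + 1) 0
  rw [neg_zero, Odd.neg_one_pow (odd_two_mul_add_one m)] at hodd
  linarith

lemma F_even_zero (m : ℕ) : F (2 * m) 0 = (1 / 4) ^ m * gbinom (-1 / 2) m := by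
  induction m with
  | zero => simp [F_zero_left, gbinom_zero]
  | succ m ih =>
    rw [mul_add_one, F_succ_succ_zero, ih, gbinom_succ]
    push_cast
    field_simp
    ring

lemma abs_F_zero_le (k : ℕ) : |F k 0| ≤ (1 / 2) ^ k := by
  induction k using Nat.twoStepInduction with
  | zero => simp [F_zero_left]
  | one => simp [F_odd_zero 0]
  | more k ih _ =>
    have hratio : ((k : ℝ) + 1) / (4 * (k + 2)) ≤ (1 / 2) ^ 2 := by
      rw [div_le_iff₀ (by positivity)]
      linarith
    rw [F_succ_succ_zero, abs_mul, abs_neg, abs_of_nonneg (by positivity), pow_add, mul_comm]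
    gcongr

end DiscretePowers

section GeneratingSeries

open PowerSeries

/-- The generating series `∑ₖ F_k(x) Xᵏ` of the discrete powers at a fixed `x`. -/
def discretePowerSeries (x : ℝ) : ℝ⟦X⟧ := PowerSeries.mk fun k => F k x

lemma coeff_discretePowerSeries (x : ℝ) (k : ℕ) : coeff k (discretePowerSeries x) = F k x :=
  coeff_mk k _

lemma discretePowerSeries_neg (x : ℝ) :
    discretePowerSeries (-x) = rescale (-1) (discretePowerSeries x) := by
  ext k
  rw [coeff_rescale, coeff_discretePowerSeries, coeff_discretePowerSeries, F_neg]

lemma discretePowerSeries_add_half (x : ℝ) :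
    discretePowerSeries (x + 1 / 2) =
      discretePowerSeries (x - 1 / 2) + X * discretePowerSeries x := by
  ext k
  cases k with
  | zero =>
    rw [map_add, coeff_zero_X_mul, coeff_discretePowerSeries, coeff_discretePowerSeries,
      F_zero_left, F_zero_left, add_zero]
  | succ k => simp only [map_add, coeff_succ_X_mul, coeff_discretePowerSeries, F_succ_add_half]

lemma discretePowerSeries_half :
    discretePowerSeries (1 / 2) = 1 + C (1 / 2) * (X * discretePowerSeries 0) := by
  ext k
  cases k with
  | zero => simp [coeff_discretePowerSeries, F_zero_left]
  | succ k =>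
    rw [map_add, coeff_C_mul, coeff_succ_X_mul, coeff_discretePowerSeries,
      coeff_discretePowerSeries, F_succ_half, coeff_one, if_neg k.succ_ne_zero]
    ring

lemma discretePowerSeries_zero_eq_expand :
    discretePowerSeries 0 =
      expand 2 two_ne_zero (rescale (1 / 4) (binomialSeries ℝ (-1 / 2 : ℝ))) := by
  ext k
  rw [coeff_expand, coeff_discretePowerSeries]
  obtain ⟨m, rfl | rfl⟩ := k.even_or_odd'
  · simp [F_even_zero, gbinom_eq_choose]
  · simp [F_odd_zero]

lemma discretePowerSeries_zero_sq_mul :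
    discretePowerSeries 0 ^ 2 * (1 + C (1 / 4) * X ^ 2) = 1 := by
  have hquad : (1 + C (1 / 4) * X ^ 2 : ℝ⟦X⟧) =
      expand 2 two_ne_zero (rescale (1 / 4) (binomialSeries ℝ (1 : ℝ))) := by
    have hlin := binomialSeries_nat (R := ℝ) (A := ℝ) 1
    rw [Nat.cast_one, pow_one] at hlin
    rw [hlin, map_add, map_add, map_one, map_one, rescale_X, map_mul, expand_C, expand_X]
  have hexponent : (-1 / 2 : ℝ) + -1 / 2 + 1 = 0 := by norm_num
  rw [discretePowerSeries_zero_eq_expand, hquad, sq, ← map_mul, ← map_mul, ← map_mul, ← map_mul,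
    ← binomialSeries_add, ← binomialSeries_add, hexponent, binomialSeries_zero, map_one, map_one]

/-- The root `μ = X / 2 + √(1 + X² / 4)` of `μ² = 1 + X μ`, with which a half-integer translation
acts on `discretePowerSeries`. The square root is written `(1 + X² / 4) c` with
`c = discretePowerSeries 0 = (1 + X² / 4)^(-1/2)`. -/
def halfStepSeries : ℝ⟦X⟧ :=
  C (1 / 2) * X + (1 + C (1 / 4) * X ^ 2) * discretePowerSeries 0

lemma C_half_sq : (C (1 / 2) ^ 2 : ℝ⟦X⟧) = C (1 / 4) := by rw [← map_pow]; norm_num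

lemma two_mul_C_half : (2 * C (1 / 2) : ℝ⟦X⟧) = 1 := by
  rw [← map_ofNat (C (R := ℝ)) 2, ← map_mul]
  norm_num

lemma halfStepSeries_sq : halfStepSeries ^ 2 = 1 + X * halfStepSeries := by
  rw [halfStepSeries, ← C_half_sq]
  have hc := discretePowerSeries_zero_sq_mul
  rw [← C_half_sq] at hc
  linear_combination (1 + C (1 / 2) ^ 2 * X ^ 2) * hc +
    (X ^ 2 * C (1 / 2) + X * (1 + C (1 / 2) ^ 2 * X ^ 2) * discretePowerSeries 0) * two_mul_C_half

lemma halfStepSeries_mul_int_div_two (m : ℤ) :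
    halfStepSeries * discretePowerSeries (m / 2) = discretePowerSeries ((m + 1) / 2) := by
  induction m with
  | zero =>
    rw [Int.cast_zero, zero_div, zero_add, discretePowerSeries_half, halfStepSeries]
    linear_combination discretePowerSeries_zero_sq_mul
  | succ m ih =>
    have hstep := discretePowerSeries_add_half ((m + 1) / 2)
    push_cast at ih ⊢
    rw [show ((m : ℝ) + 1) / 2 + 1 / 2 = (m + 1 + 1) / 2 by ring,
      show ((m : ℝ) + 1) / 2 - 1 / 2 = m / 2 by ring] at hstep
    linear_combination discretePowerSeries (m / 2) * halfStepSeries_sq - hstep -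
      (halfStepSeries - X) * ih
  | pred m ih =>
    have hstep := discretePowerSeries_add_half (-m / 2)
    push_cast at ih ⊢
    rw [show -(m : ℝ) / 2 + 1 / 2 = (-m + 1) / 2 by ring,
      show -(m : ℝ) / 2 - 1 / 2 = (-m - 1) / 2 by ring] at hstep
    rw [sub_add_cancel]
    linear_combination discretePowerSeries (-m / 2) * halfStepSeries_sq - halfStepSeries * hstep -
      halfStepSeries * ih

/-- The series `λ = μ²`, with which the translation by `1` acts on `discretePowerSeries`. -/
def stepSeries : ℝ⟦X⟧ := halfStepSeries ^ 2

lemma stepSeries_mul_int (m : ℤ) :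
    stepSeries * discretePowerSeries m = discretePowerSeries (1 + m) := by
  have hfirst := halfStepSeries_mul_int_div_two (2 * m)
  have hsecond := halfStepSeries_mul_int_div_two (2 * m + 1)
  push_cast at hfirst hsecond
  rw [mul_div_cancel_left₀ _ two_ne_zero] at hfirst
  rw [stepSeries, sq, mul_assoc, hfirst, hsecond]
  congr 1
  ring

lemma rescale_stepSeries_mul_int (m : ℤ) :
    rescale (-1) stepSeries * discretePowerSeries m = discretePowerSeries (-1 + m) := by
  have hneg := stepSeries_mul_int (-m)
  push_cast at hneg
  rw [← neg_neg (m : ℝ), discretePowerSeries_neg, ← map_mul, hneg, ← discretePowerSeries_neg]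
  congr 1
  ring

lemma stepSeries_eq :
    stepSeries = 1 + C (1 / 2) * X ^ 2 + X * discretePowerSeries 0 +
      C (1 / 4) * (X ^ 3 * discretePowerSeries 0) := by
  rw [stepSeries, halfStepSeries_sq, halfStepSeries]
  ring

lemma coeff_zero_stepSeries : coeff 0 stepSeries = 1 := by
  simp [stepSeries_eq]

lemma coeff_one_stepSeries : coeff 1 stepSeries = 1 := by
  simp [stepSeries_eq, coeff_X_pow_mul', coeff_one, coeff_X_pow, coeff_C_mul,
    -coeff_zero_eq_constantCoeff, coeff_succ_X_mul, coeff_discretePowerSeries, F_zero_left,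
    -one_div]

lemma coeff_two_stepSeries : coeff 2 stepSeries = 1 / 2 := by
  simp [stepSeries_eq, coeff_X_pow_mul', coeff_one, coeff_X_pow, coeff_C_mul,
    coeff_succ_X_mul, coeff_discretePowerSeries, F_odd_zero 0, -one_div]

lemma coeff_add_three_stepSeries (j : ℕ) :
    coeff (j + 3) stepSeries = F (j + 2) 0 + 1 / 4 * F j 0 := by
  simp [stepSeries_eq, coeff_one, coeff_X_pow, coeff_C_mul, coeff_X_pow_mul,
    coeff_succ_X_mul, coeff_discretePowerSeries, -one_div]

lemma coeff_four_stepSeries : coeff 4 stepSeries = 0 := by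
  rw [coeff_add_three_stepSeries, F_odd_zero 1, F_odd_zero 0]
  norm_num

lemma abs_coeff_stepSeries_le_one (j : ℕ) : |coeff j stepSeries| ≤ 1 := by
  match j with
  | 0 => rw [coeff_zero_stepSeries, abs_one]
  | 1 => rw [coeff_one_stepSeries, abs_one]
  | 2 => rw [coeff_two_stepSeries]; norm_num [abs_le]
  | j + 3 =>
    have hnext : |F (j + 2) 0| ≤ 1 / 4 := (abs_F_zero_le (j + 2)).trans <| by
      rw [pow_add]
      linarith [pow_le_one₀ (n := j) (one_half_pos (α := ℝ)).le one_half_lt_one.le]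
    have hcurrent : |F j 0| ≤ 1 :=
      (abs_F_zero_le j).trans <| pow_le_one₀ one_half_pos.le one_half_lt_one.le
    rw [coeff_add_three_stepSeries]
    refine (abs_add_le _ _).trans ?_
    rw [abs_mul, abs_of_pos (one_div_pos.2 (zero_lt_four' ℝ))]
    linarith

end GeneratingSeries

section TruncatedSeminorm

open PowerSeries NNReal

variable {R : Type*}

lemma map_coeff_mul_mul_pow_le [Ring R] (ν : RingSeminorm R) (r : ℝ≥0) (f g : R⟦X⟧) (a : ℕ) :
    ν (coeff a (f * g)) * r ^ a ≤
      ∑ p ∈ antidiagonal a, (ν (coeff p.1 f) * r ^ p.1) * (ν (coeff p.2 g) * r ^ p.2) := by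
  rw [coeff_mul]
  calc ν (∑ p ∈ antidiagonal a, coeff p.1 f * coeff p.2 g) * r ^ a
      ≤ (∑ p ∈ antidiagonal a, ν (coeff p.1 f * coeff p.2 g)) * r ^ a := by
        gcongr
        exact le_sum_of_subadditive ν (map_zero ν).le (map_add_le_add ν) _ _
    _ ≤ _ := by
        rw [sum_mul]
        refine sum_le_sum fun p hp => ?_
        rw [mul_mul_mul_comm, ← pow_add, HasAntidiagonal.mem_antidiagonal.1 hp]
        gcongr
        exact map_mul_le_mul ν _ _

/-- The ring seminorm `∑_{a ≤ k} ν(f_a) rᵃ` on power series: the weighted `ℓ¹` norm, at radius `r`,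
of the truncation of `f` after degree `k`. -/
def truncSeminorm [Ring R] (ν : RingSeminorm R) (k : ℕ) (r : ℝ≥0) : RingSeminorm R⟦X⟧ where
  toFun f := ∑ a ∈ range (k + 1), ν (coeff a f) * r ^ a
  map_zero' := by simp
  neg' f := by simp
  add_le' f g := by
    rw [← sum_add_distrib]
    gcongr with a
    rw [map_add, ← add_mul]
    gcongr
    exact map_add_le_add ν _ _
  mul_le' f g := by
    have hfiber {a : ℕ} (ha : a ∈ range (k + 1)) :
        antidiagonal a = {p ∈ range (k + 1) ×ˢ range (k + 1) | p.1 + p.2 = a} := by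
      ext p
      simp only [HasAntidiagonal.mem_antidiagonal, mem_filter, mem_product, mem_range] at ha ⊢
      lia
    rw [sum_mul_sum, ← sum_product']
    refine (sum_le_sum fun a _ => map_coeff_mul_mul_pow_le ν r f g a).trans ?_
    rw [sum_congr rfl fun a ha => by rw [hfiber ha],
      sum_fiberwise_eq_sum_filter _ _ fun p : ℕ × ℕ => p.1 + p.2]
    exact sum_le_sum_of_subset_of_nonneg (filter_subset _ _) fun p _ _ => by positivity

lemma truncSeminorm_apply [Ring R] (ν : RingSeminorm R) (k : ℕ) (r : ℝ≥0) (f : R⟦X⟧) :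
    truncSeminorm ν k r f = ∑ a ∈ range (k + 1), ν (coeff a f) * r ^ a := rfl

lemma coeff_mul_pow_le_truncSeminorm [Ring R] (ν : RingSeminorm R) {a k : ℕ} (hak : a ≤ k)
    (r : ℝ≥0) (f : R⟦X⟧) : ν (coeff a f) * r ^ a ≤ truncSeminorm ν k r f :=
  single_le_sum (f := fun a => ν (coeff a f) * (r : ℝ) ^ a) (fun _ _ => by positivity)
    (mem_range_succ_iff.2 hak)

/-- The truncated weighted `ℓ¹` seminorm `∑_{a, b ≤ k} |f_{ab}| r^(a + b)` on power series in two
variables, the latter being encoded as power series over power series. -/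
def bivariateSeminorm (k : ℕ) (r : ℝ≥0) : RingSeminorm ℂ⟦X⟧⟦X⟧ :=
  truncSeminorm (truncSeminorm (normRingSeminorm ℂ) k r) k r

lemma bivariateSeminorm_apply (k : ℕ) (r : ℝ≥0) (f : ℂ⟦X⟧⟦X⟧) :
    bivariateSeminorm k r f =
      ∑ a ∈ range (k + 1), ∑ b ∈ range (k + 1), ‖coeff b (coeff a f)‖ * r ^ (a + b) := by
  simp only [bivariateSeminorm, truncSeminorm_apply, sum_mul, pow_add]
  exact sum_congr rfl fun a _ => sum_congr rfl fun b _ => by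
    rw [mul_comm ((r : ℝ) ^ a), ← mul_assoc]; rfl

lemma norm_coeff_mul_pow_le_bivariateSeminorm (k : ℕ) (r : ℝ≥0) (f : ℂ⟦X⟧⟦X⟧) :
    ‖coeff k (coeff k f)‖ * (r ^ 2) ^ k ≤ bivariateSeminorm k r f := by
  calc ‖coeff k (coeff k f)‖ * (r ^ 2 : ℝ) ^ k
      = ‖coeff k (coeff k f)‖ * r ^ k * r ^ k := by rw [← pow_mul, mul_assoc, ← pow_add]; ring_nf
    _ ≤ truncSeminorm (normRingSeminorm ℂ) k r (coeff k f) * r ^ k := by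
        gcongr
        exact coeff_mul_pow_le_truncSeminorm (normRingSeminorm ℂ) le_rfl r _
    _ ≤ bivariateSeminorm k r f := coeff_mul_pow_le_truncSeminorm _ le_rfl r f

lemma bivariateSeminorm_le_of_coeff_eq_zero {k d : ℕ} {r : ℝ≥0} {f : ℂ⟦X⟧⟦X⟧} {K : ℝ}
    (hr : (2 * r : ℝ) ≤ 1) (hK : ∀ a b, ‖coeff b (coeff a f)‖ ≤ K)
    (hd : ∀ a b, a + b < d → coeff b (coeff a f) = 0) :
    bivariateSeminorm k r f ≤ 4 * K * (2 * r) ^ d := by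
  have hK0 : 0 ≤ K := (norm_nonneg _).trans (hK 0 0)
  have hterm (a b : ℕ) : ‖coeff b (coeff a f)‖ * (r : ℝ) ^ (a + b) ≤
      K * (2 * r) ^ d * ((1 / 2) ^ a * (1 / 2) ^ b) := by
    rcases lt_or_ge (a + b) d with hlt | hge
    · rw [hd a b hlt, norm_zero, zero_mul]
      positivity
    · calc ‖coeff b (coeff a f)‖ * (r : ℝ) ^ (a + b)
          ≤ K * (2 * r * (1 / 2)) ^ (a + b) := by
            rw [mul_right_comm, mul_one_div_cancel two_ne_zero, one_mul]
            gcongr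
            exact hK a b
        _ = K * (2 * r) ^ (a + b) * ((1 / 2) ^ a * (1 / 2) ^ b) := by
            rw [mul_pow, ← pow_add, mul_assoc]
        _ ≤ _ := by
            gcongr ?_ * _
            exact mul_le_mul_of_nonneg_left (pow_le_pow_of_le_one (by positivity) hr hge) hK0
  calc bivariateSeminorm k r f
      ≤ ∑ a ∈ range (k + 1), ∑ b ∈ range (k + 1),
          K * (2 * r) ^ d * ((1 / 2) ^ a * (1 / 2) ^ b) := by
        rw [bivariateSeminorm_apply]
        exact sum_le_sum fun a _ => sum_le_sum fun b _ => hterm a b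
    _ = K * (2 * r) ^ d *
          ((∑ a ∈ range (k + 1), (1 / 2 : ℝ) ^ a) * ∑ b ∈ range (k + 1), (1 / 2 : ℝ) ^ b) := by
        rw [sum_mul_sum]
        simp only [mul_sum]
    _ ≤ K * (2 * r) ^ d * (2 * 2) := by gcongr <;> exact sum_geometric_two_le _
    _ = 4 * K * (2 * r) ^ d := by ring

end TruncatedSeminorm

section Perturbation

variable {R : Type*} [CommRing R] (p : RingSeminorm R)

lemma map_add_pow_mul_pow_le {d : R} {σ : ℝ} {n : ℕ} (hd : ∀ i ≤ n, p (d ^ i) ≤ σ) (x : R)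
    (i j : ℕ) (hij : i + j ≤ n) : p ((d + x) ^ i * d ^ j) ≤ (1 + p x) ^ i * σ := by
  induction i generalizing j with
  | zero => simpa using hd j (by lia)
  | succ i ih =>
    calc p ((d + x) ^ (i + 1) * d ^ j)
        = p ((d + x) ^ i * d ^ (j + 1) + x * ((d + x) ^ i * d ^ j)) := by congr 1; ring
      _ ≤ p ((d + x) ^ i * d ^ (j + 1)) + p x * p ((d + x) ^ i * d ^ j) :=
          (map_add_le_add p _ _).trans (by gcongr; exact map_mul_le_mul p _ _)
      _ ≤ (1 + p x) ^ i * σ + p x * ((1 + p x) ^ i * σ) := by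
          gcongr
          exacts [ih (j + 1) (by lia), ih j (by lia)]
      _ = (1 + p x) ^ (i + 1) * σ := by ring

lemma map_add_pow_mul_pow_sub_le {d : R} {σ : ℝ} {n : ℕ} (hd : ∀ i ≤ n, p (d ^ i) ≤ σ) (x : R)
    (i j : ℕ) (hij : i + j ≤ n) :
    p ((d + x) ^ i * d ^ j - d ^ (i + j)) ≤ ((1 + p x) ^ i - 1) * σ := by
  induction i generalizing j with
  | zero => simp
  | succ i ih =>
    calc p ((d + x) ^ (i + 1) * d ^ j - d ^ (i + 1 + j))
        = p (((d + x) ^ i * d ^ (j + 1) - d ^ (i + (j + 1))) + x * ((d + x) ^ i * d ^ j)) := by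
          congr 1; ring
      _ ≤ p ((d + x) ^ i * d ^ (j + 1) - d ^ (i + (j + 1))) + p x * p ((d + x) ^ i * d ^ j) :=
          (map_add_le_add p _ _).trans (by gcongr; exact map_mul_le_mul p _ _)
      _ ≤ ((1 + p x) ^ i - 1) * σ + p x * ((1 + p x) ^ i * σ) := by
          gcongr
          exacts [ih (j + 1) (by lia), map_add_pow_mul_pow_le p hd x i j (by lia)]
      _ = ((1 + p x) ^ (i + 1) - 1) * σ := by ring

lemma map_add_pow_mul_one_add_sub_le {d : R} {σ : ℝ} {n : ℕ} (hd : ∀ i ≤ n, p (d ^ i) ≤ σ)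
    (x e : R) :
    p ((d + x) ^ n * (1 + e) - d ^ n) ≤ ((1 + p x) ^ n * (1 + p e) - 1) * σ := by
  have hpow : p ((d + x) ^ n) ≤ (1 + p x) ^ n * σ := by
    simpa using map_add_pow_mul_pow_le p hd x n 0 le_rfl
  have hsub : p ((d + x) ^ n - d ^ n) ≤ ((1 + p x) ^ n - 1) * σ := by
    simpa using map_add_pow_mul_pow_sub_le p hd x n 0 le_rfl
  calc p ((d + x) ^ n * (1 + e) - d ^ n)
      = p ((d + x) ^ n - d ^ n + (d + x) ^ n * e) := by congr 1; ring
    _ ≤ p ((d + x) ^ n - d ^ n) + p ((d + x) ^ n) * p e :=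
        (map_add_le_add p _ _).trans (by gcongr; exact map_mul_le_mul p _ _)
    _ ≤ ((1 + p x) ^ n - 1) * σ + (1 + p x) ^ n * σ * p e := by gcongr
    _ = ((1 + p x) ^ n * (1 + p e) - 1) * σ := by ring

end Perturbation

section WalkIdentity

open PowerSeries

lemma map_sum_eq_prod_mul {G M ι : Type*} [AddCommMonoid G] [CommMonoid M] {S : Set G}
    {w m : G → M} (hw : ∀ s ∈ S, ∀ p, w (s + p) = m s * w p) (t : Finset ι) {x : ι → G}
    (hx : ∀ i ∈ t, x i ∈ S) : w (∑ i ∈ t, x i) = (∏ i ∈ t, m (x i)) * w 0 := by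
  induction t using Finset.cons_induction with
  | empty => simp
  | cons i t hi ih =>
    rw [sum_cons, prod_cons, hw _ (hx i (mem_cons_self i t)),
      ih fun j hj => hx j (mem_cons_of_mem hj), mul_assoc]

/-- The tensor product of a series with its conjugate: the bivariate series with coefficients
`f_j * conj f_k`, where `j` is the exponent of the outer variable and `k` that of the inner one. -/
def hermitianSquare : ℂ⟦X⟧ →* ℂ⟦X⟧⟦X⟧ :=
  (PowerSeries.map (C (R := ℂ)) : ℂ⟦X⟧ →* ℂ⟦X⟧⟦X⟧) *
    ((C (R := ℂ⟦X⟧)).comp (PowerSeries.map (starRingEnd ℂ)) : ℂ⟦X⟧ →* ℂ⟦X⟧⟦X⟧)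

lemma coeff_coeff_hermitianSquare (f : ℂ⟦X⟧) (j k : ℕ) :
    coeff k (coeff j (hermitianSquare f)) = coeff j f * starRingEnd ℂ (coeff k f) := by
  change coeff k (coeff j (PowerSeries.map C f * C (PowerSeries.map (starRingEnd ℂ) f))) = _
  rw [coeff_mul_C, coeff_map, coeff_C_mul, coeff_map]

/-- The generating series `∑ₖ Z_k(p) Xᵏ` at a lattice point `p`. -/
def harmonicSeries (p : ℤ × ℤ) : ℂ⟦X⟧ :=
  PowerSeries.map Complex.ofRealHom (discretePowerSeries p.1) *
    rescale Complex.I (PowerSeries.map Complex.ofRealHom (discretePowerSeries p.2))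

lemma coeff_harmonicSeries (p : ℤ × ℤ) (k : ℕ) : coeff k (harmonicSeries p) = Z k p.1 p.2 := by
  rw [harmonicSeries, mul_comm, coeff_mul, Nat.sum_antidiagonal_eq_sum_range_succ_mk, Z]
  refine sum_congr rfl fun l _ => ?_
  rw [coeff_rescale, coeff_map, coeff_map, coeff_discretePowerSeries, coeff_discretePowerSeries]
  exact mul_right_comm _ _ _

/-- The factor by which `harmonicSeries` changes under a step `s = (x, y)` of the walk: the series
`λ(z X)` with `z = x + i y` and `λ = stepSeries`. -/
def stepMultiplier (s : ℤ × ℤ) : ℂ⟦X⟧ :=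
  rescale (s.1 + s.2 * Complex.I : ℂ) (PowerSeries.map Complex.ofRealHom stepSeries)

lemma coeff_stepMultiplier (s : ℤ × ℤ) (k : ℕ) :
    coeff k (stepMultiplier s) = (s.1 + s.2 * Complex.I) ^ k * (coeff k stepSeries : ℝ) := by
  rw [stepMultiplier, coeff_rescale, coeff_map]
  rfl

lemma harmonicSeries_add {s : ℤ × ℤ} (hs : s ∈ Sfin) (p : ℤ × ℤ) :
    harmonicSeries (s + p) = stepMultiplier s * harmonicSeries p := by
  obtain ⟨x, y⟩ := p
  have hright := congrArg (PowerSeries.map Complex.ofRealHom) (stepSeries_mul_int x)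
  have hleft := congrArg (PowerSeries.map Complex.ofRealHom) (rescale_stepSeries_mul_int x)
  have hup := congrArg (fun f => rescale Complex.I (PowerSeries.map Complex.ofRealHom f))
    (stepSeries_mul_int y)
  have hdown := congrArg (fun f => rescale Complex.I (PowerSeries.map Complex.ofRealHom f))
    (rescale_stepSeries_mul_int y)
  simp only [map_mul, ← rescale_map, rescale_rescale, map_neg, map_one, neg_mul,
    one_mul] at hright hleft hup hdown
  simp only [Sfin, mem_insert, mem_singleton] at hs
  rcases hs with rfl | rfl | rfl | rfl
  · simp [harmonicSeries, stepMultiplier, ← hright, mul_assoc]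
  · simp [harmonicSeries, stepMultiplier, ← hleft, mul_assoc]
  · simp [harmonicSeries, stepMultiplier, ← hup, mul_left_comm]
  · simp [harmonicSeries, stepMultiplier, ← hdown, mul_left_comm]

/-- The average of `hermitianSquare (stepMultiplier s)` over the four steps `s`, by which the
generating series `∑_{j,k} E[Z_j(S_n) conj Z_k(S_n)] tʲ uᵏ` changes from `n` to `n + 1`. -/
def walkMultiplier : ℂ⟦X⟧⟦X⟧ :=
  C (C (1 / 4)) * ∑ s ∈ Sfin, hermitianSquare (stepMultiplier s)

lemma walkMultiplier_pow_mul (n : ℕ) :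
    walkMultiplier ^ n * hermitianSquare (harmonicSeries 0) =
      C (C (4⁻¹ ^ n)) * ∑ s ∈ Fintype.piFinset fun _ : Fin n => Sfin,
        hermitianSquare (harmonicSeries (∑ i, s i)) := by
  have hpath {s : Fin n → ℤ × ℤ} (hs : s ∈ Fintype.piFinset fun _ => Sfin) :
      hermitianSquare (harmonicSeries (∑ i, s i)) =
        (∏ i, hermitianSquare (stepMultiplier (s i))) * hermitianSquare (harmonicSeries 0) :=
    map_sum_eq_prod_mul (S := Sfin) (w := fun p => hermitianSquare (harmonicSeries p))
      (m := fun p => hermitianSquare (stepMultiplier p))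
      (fun s hs p => by rw [harmonicSeries_add hs, map_mul]) univ
      fun i _ => Fintype.mem_piFinset.1 hs i
  rw [sum_congr rfl fun s hs => hpath hs, ← sum_mul,
    sum_prod_piFinset Sfin fun _ s => hermitianSquare (stepMultiplier s), prod_const, card_univ,
    Fintype.card_fin, walkMultiplier, mul_pow, ← map_pow, ← map_pow, one_div, mul_assoc]

lemma Qk_eq_coeff (k n : ℕ) :
    (Qk k n : ℂ) =
      coeff k (coeff k (walkMultiplier ^ n * hermitianSquare (harmonicSeries 0))) := by
  rw [walkMultiplier_pow_mul, coeff_C_mul, coeff_C_mul, map_sum, map_sum, Qk, Q]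
  push_cast
  congr 1
  refine sum_congr rfl fun s _ => ?_
  rw [coeff_coeff_hermitianSquare, coeff_harmonicSeries, Complex.mul_conj']

end WalkIdentity

section WalkMultiplier

open PowerSeries

lemma sum_Sfin {M : Type*} [AddCommMonoid M] (f : ℤ × ℤ → M) :
    ∑ s ∈ Sfin, f s = f (1, 0) + (f (-1, 0) + (f (0, 1) + f (0, -1))) := by
  rw [Sfin, sum_insert (by decide), sum_insert (by decide), sum_insert (by decide), sum_singleton]

-- As `z⁴ = 1`, this is the orthogonality of the characters `z ↦ zʲ` and `z ↦ zᵏ`.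
lemma sum_Sfin_pow_mul_conj_pow (j k : ℕ) :
    ∑ s ∈ Sfin, (s.1 + s.2 * Complex.I) ^ j * starRingEnd ℂ ((s.1 + s.2 * Complex.I) ^ k) =
      if j ≡ k [MOD 4] then (4 : ℂ) else 0 := by
  have hI : Complex.I ^ 4 = 1 := Complex.I_pow_four
  have hneg_I : (-Complex.I) ^ 4 = 1 := by rw [Even.neg_pow (by decide), hI]
  have hneg_one : (-1 : ℂ) ^ 4 = 1 := by norm_num
  have hresidues {a b : ℕ} (ha : a < 4) (hb : b < 4) :
      1 + ((-1) ^ a * (-1) ^ b +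
        (Complex.I ^ a * (-Complex.I) ^ b + (-Complex.I) ^ a * Complex.I ^ b)) =
      if a = b then (4 : ℂ) else 0 := by
    interval_cases a <;> interval_cases b <;> norm_num [pow_succ, Complex.I_mul_I]
  simp only [sum_Sfin, map_pow, map_add, map_mul, Complex.conj_I, map_intCast, Int.cast_zero,
    Int.cast_one, Int.cast_neg, zero_mul, one_mul, neg_mul, zero_add, add_zero, neg_neg, one_pow]
  rw [pow_eq_pow_mod j hI, pow_eq_pow_mod k hI, pow_eq_pow_mod j hneg_I, pow_eq_pow_mod k hneg_I,
    pow_eq_pow_mod j hneg_one, pow_eq_pow_mod k hneg_one]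
  exact hresidues (Nat.mod_lt j four_pos) (Nat.mod_lt k four_pos)

lemma coeff_coeff_walkMultiplier (j k : ℕ) :
    coeff k (coeff j walkMultiplier) =
      if j ≡ k [MOD 4] then ((coeff j stepSeries * coeff k stepSeries : ℝ) : ℂ) else 0 := by
  have hterm (s : ℤ × ℤ) : coeff k (coeff j (hermitianSquare (stepMultiplier s))) =
      ((coeff j stepSeries * coeff k stepSeries : ℝ) : ℂ) *
        ((s.1 + s.2 * Complex.I) ^ j * starRingEnd ℂ ((s.1 + s.2 * Complex.I) ^ k)) := by
    rw [coeff_coeff_hermitianSquare, coeff_stepMultiplier, coeff_stepMultiplier, map_mul,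
      Complex.conj_ofReal]
    push_cast
    ring
  rw [walkMultiplier, coeff_C_mul, coeff_C_mul, map_sum, map_sum, sum_congr rfl fun s _ => hterm s,
    ← mul_sum, sum_Sfin_pow_mul_conj_pow]
  split_ifs
  · ring
  · ring

lemma norm_coeff_coeff_walkMultiplier_le_one (j k : ℕ) :
    ‖coeff k (coeff j walkMultiplier)‖ ≤ 1 := by
  rw [coeff_coeff_walkMultiplier]
  split_ifs
  · rw [Complex.norm_real, norm_mul]
    exact mul_le_one₀ (abs_coeff_stepSeries_le_one j) (abs_nonneg _) (abs_coeff_stepSeries_le_one k)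
  · simp

/-- The bivariate polynomial `1 + t u / 2`, whose square agrees with `walkMultiplier` up to terms of
total degree at least `6`. -/
def diagonalSeries : ℂ⟦X⟧⟦X⟧ := rescale (C (1 / 2) * X) (1 + X)

lemma coeff_coeff_diagonalSeries_pow (n j k : ℕ) :
    coeff k (coeff j (diagonalSeries ^ n)) = if k = j then (n.choose j / 2 ^ j : ℂ) else 0 := by
  have hbinomial : coeff j ((1 + X : ℂ⟦X⟧⟦X⟧) ^ n) = C (n.choose j : ℂ) := by
    rw [map_natCast, ← Polynomial.coeff_one_add_X_pow, ← Polynomial.coeff_coe]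
    simp
  rw [diagonalSeries, ← map_pow, coeff_rescale, hbinomial, mul_pow, ← map_pow, coeff_mul_C,
    coeff_C_mul_X_pow]
  split_ifs
  · simp [div_eq_inv_mul]
  · rw [zero_mul]

lemma norm_coeff_coeff_diagonalSeries_sq_le_one (j k : ℕ) :
    ‖coeff k (coeff j (diagonalSeries ^ 2))‖ ≤ 1 := by
  rw [coeff_coeff_diagonalSeries_pow]
  split_ifs
  · match j with
    | 0 => simp
    | 1 => simp
    | 2 => norm_num
    | j + 3 => simp [Nat.choose_eq_zero_of_lt]
  · simp

lemma coeff_coeff_walkMultiplier_sub_eq_zero {j k : ℕ} (h : j + k < 6) :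
    coeff k (coeff j (walkMultiplier - diagonalSeries ^ 2)) = 0 := by
  have hsmall : j < 6 ∧ k < 6 := by lia
  obtain ⟨hj, hk⟩ := hsmall
  rw [map_sub, map_sub, coeff_coeff_walkMultiplier, coeff_coeff_diagonalSeries_pow]
  interval_cases j <;> interval_cases k <;> first
    | lia
    | norm_num [Nat.ModEq, coeff_zero_stepSeries, coeff_one_stepSeries, coeff_two_stepSeries,
        coeff_four_stepSeries, -coeff_zero_eq_constantCoeff]

lemma norm_Z_zero_le_one (k : ℕ) : ‖Z k 0 0‖ ≤ 1 := by
  have hterm {l : ℕ} (hl : l ∈ range (k + 1)) :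
      ‖Complex.I ^ l * (F (k - l) 0 : ℂ) * (F l 0 : ℂ)‖ ≤ (1 / 2) ^ k := by
    rw [norm_mul, norm_mul, norm_pow, Complex.norm_I, one_pow, one_mul, Complex.norm_real,
      Complex.norm_real, ← Nat.sub_add_cancel (mem_range_succ_iff.1 hl), pow_add,
      Nat.sub_add_cancel (mem_range_succ_iff.1 hl)]
    exact mul_le_mul (abs_F_zero_le _) (abs_F_zero_le _) (abs_nonneg _) (by positivity)
  calc ‖Z k 0 0‖ ≤ ∑ _l ∈ range (k + 1), (1 / 2 : ℝ) ^ k :=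
        (norm_sum_le _ _).trans (sum_le_sum fun l hl => hterm hl)
    _ = ((k + 1 : ℕ) : ℝ) * (1 / 2) ^ k := by rw [sum_const, card_range, nsmul_eq_mul]
    _ ≤ 2 ^ k * (1 / 2) ^ k := by
        gcongr
        exact_mod_cast k.lt_two_pow_self
    _ = 1 := by rw [← mul_pow, mul_one_div_cancel two_ne_zero, one_pow]

end WalkMultiplier

section SaddlePoint

open PowerSeries NNReal

lemma bivariateSeminorm_diagonalSeries_pow (k : ℕ) (r : ℝ≥0) (n : ℕ) :
    bivariateSeminorm k r (diagonalSeries ^ n) =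
      ∑ m ∈ range (k + 1), (n.choose m : ℝ) / 2 ^ m * (r ^ 2) ^ m := by
  rw [bivariateSeminorm_apply]
  refine sum_congr rfl fun m hm => ?_
  rw [sum_eq_single_of_mem m hm fun b _ hb => by
    rw [coeff_coeff_diagonalSeries_pow, if_neg hb, norm_zero, zero_mul],
    coeff_coeff_diagonalSeries_pow, if_pos rfl, ← two_mul, pow_mul]
  simp

lemma bivariateSeminorm_walkMultiplier_sub_le (k : ℕ) {r : ℝ≥0} (hr : (2 * r : ℝ) ≤ 1) :
    bivariateSeminorm k r (walkMultiplier - diagonalSeries ^ 2) ≤ 512 * (r ^ 2) ^ 3 := by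
  have hnorm (a b : ℕ) : ‖coeff b (coeff a (walkMultiplier - diagonalSeries ^ 2))‖ ≤ 1 + 1 := by
    rw [map_sub, map_sub]
    exact (norm_sub_le _ _).trans (add_le_add (norm_coeff_coeff_walkMultiplier_le_one a b)
      (norm_coeff_coeff_diagonalSeries_sq_le_one a b))
  refine (bivariateSeminorm_le_of_coeff_eq_zero hr hnorm fun a b =>
    coeff_coeff_walkMultiplier_sub_eq_zero).trans_eq ?_
  ring

lemma bivariateSeminorm_hermitianSquare_harmonicSeries_zero_sub_one_le (k : ℕ) {r : ℝ≥0}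
    (hr : (2 * r : ℝ) ≤ 1) :
    bivariateSeminorm k r (hermitianSquare (harmonicSeries 0) - 1) ≤ 8 * r := by
  have hcoeff (a b : ℕ) : coeff b (coeff a (hermitianSquare (harmonicSeries 0) - 1)) =
      if a = 0 ∧ b = 0 then 0 else Z a 0 0 * starRingEnd ℂ (Z b 0 0) := by
    rw [map_sub, map_sub, coeff_coeff_hermitianSquare, coeff_harmonicSeries, coeff_harmonicSeries,
      coeff_one]
    rcases eq_or_ne a 0 with rfl | ha
    · rcases eq_or_ne b 0 with rfl | hb
      · simp [Z, F_zero_left]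
      · simp [coeff_one, hb]
    · simp [ha]
  have hnorm (a b : ℕ) : ‖coeff b (coeff a (hermitianSquare (harmonicSeries 0) - 1))‖ ≤ 1 := by
    rw [hcoeff]
    split_ifs
    · simp
    · rw [norm_mul, RCLike.norm_conj]
      exact mul_le_one₀ (norm_Z_zero_le_one a) (norm_nonneg _) (norm_Z_zero_le_one b)
  refine (bivariateSeminorm_le_of_coeff_eq_zero (d := 1) hr hnorm fun a b hab => ?_).trans_eq ?_
  · rw [hcoeff, if_pos (by lia)]
  · ring

lemma abs_Qk_sub_mul_pow_le {k n : ℕ} {r : ℝ≥0} {σ : ℝ} (hr : (2 * r : ℝ) ≤ 1)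
    (hσ : ∀ i ≤ n, bivariateSeminorm k r (diagonalSeries ^ (2 * i)) ≤ σ) :
    |Qk k n - (2 * n).choose k / 2 ^ k| * (r ^ 2) ^ k ≤
      ((1 + 512 * (r ^ 2) ^ 3) ^ n * (1 + 8 * r) - 1) * σ := by
  set q := bivariateSeminorm k r (walkMultiplier - diagonalSeries ^ 2)
  set ε := bivariateSeminorm k r (hermitianSquare (harmonicSeries 0) - 1)
  have hσ0 : 0 ≤ σ := (apply_nonneg _ _).trans (hσ 0 n.zero_le)
  have hcoeff : ((Qk k n - (2 * n).choose k / 2 ^ k : ℝ) : ℂ) =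
      coeff k (coeff k (walkMultiplier ^ n * hermitianSquare (harmonicSeries 0) -
        (diagonalSeries ^ 2) ^ n)) := by
    rw [map_sub, map_sub, ← Qk_eq_coeff, ← pow_mul, coeff_coeff_diagonalSeries_pow, if_pos rfl]
    push_cast
    rfl
  have hperturb := map_add_pow_mul_one_add_sub_le (bivariateSeminorm k r)
    (d := diagonalSeries ^ 2) (fun i hi => by rw [← pow_mul]; exact hσ i hi)
    (walkMultiplier - diagonalSeries ^ 2) (hermitianSquare (harmonicSeries 0) - 1)
  rw [add_sub_cancel, add_sub_cancel] at hperturb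
  calc |Qk k n - (2 * n).choose k / 2 ^ k| * (r ^ 2 : ℝ) ^ k
      ≤ bivariateSeminorm k r (walkMultiplier ^ n * hermitianSquare (harmonicSeries 0) -
          (diagonalSeries ^ 2) ^ n) := by
        rw [← Real.norm_eq_abs, ← Complex.norm_real, hcoeff]
        exact norm_coeff_mul_pow_le_bivariateSeminorm k r _
    _ ≤ ((1 + q) ^ n * (1 + ε) - 1) * σ := hperturb
    _ ≤ ((1 + 512 * (r ^ 2) ^ 3) ^ n * (1 + 8 * r) - 1) * σ := by
        gcongr
        · exact bivariateSeminorm_walkMultiplier_sub_le k hr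
        · exact bivariateSeminorm_hermitianSquare_harmonicSeries_zero_sub_one_le k hr

lemma sum_range_succ_le_two_mul_of_two_mul_le_succ {u : ℕ → ℝ} {k : ℕ} (h0 : 0 ≤ u 0)
    (hu : ∀ m < k, 2 * u m ≤ u (m + 1)) : ∑ m ∈ range (k + 1), u m ≤ 2 * u k := by
  induction k with
  | zero => simpa [two_mul] using h0
  | succ k ih =>
    rw [sum_range_succ]
    linarith [ih fun m hm => hu m (by lia), hu k k.lt_succ_self]

lemma sum_choose_div_two_pow_mul_pow_le {n k : ℕ} {ρ : ℝ} (hkn : k ≤ n) (hρ0 : 0 ≤ ρ)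
    (hρ : 4 * k ≤ n * ρ) :
    ∑ m ∈ range (k + 1), ((2 * n).choose m : ℝ) / 2 ^ m * ρ ^ m ≤
      2 * (((2 * n).choose k : ℝ) / 2 ^ k * ρ ^ k) := by
  refine sum_range_succ_le_two_mul_of_two_mul_le_succ (by positivity) fun m hm => ?_
  have hrec : ((2 * n).choose (m + 1) : ℝ) * (m + 1) = (2 * n).choose m * (2 * n - m) := by
    have hnat := (2 * n).choose_succ_right_eq m
    rw [← Nat.cast_inj (R := ℝ)] at hnat
    push_cast [Nat.cast_sub (show m ≤ 2 * n by lia)] at hnat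
    exact hnat
  have hratio : 4 * ((m : ℝ) + 1) ≤ (2 * n - m) * ρ := by
    have hmk : (m : ℝ) + 1 ≤ k := by exact_mod_cast hm
    have hmn : (n : ℝ) ≤ 2 * n - m := by
      have : (m : ℝ) ≤ n := by exact_mod_cast hm.le.trans hkn
      linarith
    nlinarith
  have hdouble : 4 * ((2 * n).choose m : ℝ) ≤ (2 * n).choose (m + 1) * ρ := by
    refine le_of_mul_le_mul_right ?_ (show (0 : ℝ) < m + 1 by positivity)
    calc 4 * ((2 * n).choose m : ℝ) * (m + 1)
        = (2 * n).choose m * (4 * (m + 1)) := by ring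
      _ ≤ (2 * n).choose m * ((2 * n - m) * ρ) := by gcongr
      _ = (2 * n).choose (m + 1) * ρ * (m + 1) := by linear_combination -ρ * hrec
  calc 2 * (((2 * n).choose m : ℝ) / 2 ^ m * ρ ^ m)
      = 4 * ((2 * n).choose m : ℝ) * (ρ ^ m / 2 ^ (m + 1)) := by field_simp; ring
    _ ≤ (2 * n).choose (m + 1) * ρ * (ρ ^ m / 2 ^ (m + 1)) := by gcongr
    _ = ((2 * n).choose (m + 1) : ℝ) / 2 ^ (m + 1) * ρ ^ (m + 1) := by ring

lemma bivariateSeminorm_diagonalSeries_pow_le {n k : ℕ} {r : ℝ≥0} (hkn : k ≤ n)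
    (hr : (4 * k : ℝ) ≤ n * r ^ 2) {i : ℕ} (hi : i ≤ n) :
    bivariateSeminorm k r (diagonalSeries ^ (2 * i)) ≤
      2 * ((2 * n).choose k / 2 ^ k * (r ^ 2) ^ k) := by
  rw [bivariateSeminorm_diagonalSeries_pow]
  refine le_trans ?_ (sum_choose_div_two_pow_mul_pow_le hkn (by positivity) hr)
  gcongr

lemma one_add_pow_le_inv_one_sub {q t : ℝ} {n : ℕ} (hq : 0 ≤ q) (hnq : n * q ≤ t) (ht : t < 1) :
    (1 + q) ^ n ≤ (1 - t)⁻¹ := by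
  calc (1 + q) ^ n ≤ Real.exp q ^ n := by
        gcongr
        linarith [Real.add_one_le_exp q]
    _ = Real.exp (n * q) := (Real.exp_nat_mul q n).symm
    _ ≤ Real.exp t := Real.exp_le_exp.2 hnq
    _ = (Real.exp (-t))⁻¹ := by rw [Real.exp_neg, inv_inv]
    _ ≤ (1 - t)⁻¹ := by
        refine inv_anti₀ ?_ ?_
        · linarith
        · linarith [Real.add_one_le_exp (-t)]

lemma mul_natCast_le_of_mul_cube_le_sq {k n : ℕ} {c : ℝ}
    (h : c ^ 2 * (k : ℝ) ^ 3 ≤ n ^ 2) : c * k ≤ n := by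
  rcases k.eq_zero_or_pos with rfl | hk
  · simp
  refine (abs_le_of_sq_le_sq' ?_ n.cast_nonneg).2
  calc (c * k) ^ 2 = c ^ 2 * (k : ℝ) ^ 2 := by ring
    _ ≤ c ^ 2 * (k : ℝ) ^ 3 := by
        gcongr
        · exact_mod_cast hk
        · norm_num
    _ ≤ n ^ 2 := h

/-- The radius `r = 2 √(k / n)` at which the terms `binom(2n, m) 2⁻ᵐ r²ᵐ`, `m ≤ k`, are dominated
by the last one. -/
def saddleRadius (k n : ℕ) : ℝ≥0 := NNReal.sqrt (4 * k / n)

lemma saddleRadius_sq (k n : ℕ) : (saddleRadius k n : ℝ) ^ 2 = 4 * k / n := by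
  rw [saddleRadius, ← NNReal.coe_pow, NNReal.sq_sqrt]
  simp

lemma saddleRadius_le {k n : ℕ} (h : (65536 : ℝ) * k ≤ n) : (saddleRadius k n : ℝ) ≤ 1 / 128 := by
  refine (abs_le_of_sq_le_sq' ?_ (by norm_num)).2
  rw [saddleRadius_sq]
  exact div_le_of_le_mul₀ n.cast_nonneg (by norm_num) (by linarith)

lemma saddleRadius_relative_error_le {k n : ℕ} (h : 2 ^ 32 * (k : ℝ) ^ 3 ≤ n ^ 2)
    (hr : (saddleRadius k n : ℝ) ≤ 1 / 128) :
    (1 + 512 * ((saddleRadius k n : ℝ) ^ 2) ^ 3) ^ n * (1 + 8 * saddleRadius k n) - 1 ≤ 1 / 8 := by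
  have hexponent : (n : ℝ) * (512 * ((saddleRadius k n : ℝ) ^ 2) ^ 3) ≤ 1 / 32 := by
    rw [saddleRadius_sq]
    calc (n : ℝ) * (512 * (4 * k / n) ^ 3) = 32768 * (k ^ 3 / n ^ 2) := by
          rcases eq_or_ne n 0 with rfl | hn
          · simp
          · field_simp
            ring
      _ ≤ 32768 * (1 / 2 ^ 32) := by
          gcongr 32768 * ?_
          exact div_le_of_le_mul₀ (by positivity) (by norm_num) (by linarith)
      _ ≤ 1 / 32 := by norm_num
  calc (1 + 512 * ((saddleRadius k n : ℝ) ^ 2) ^ 3) ^ n * (1 + 8 * saddleRadius k n) - 1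
      ≤ (1 - 1 / 32)⁻¹ * (1 + 8 * (1 / 128)) - 1 := by
        gcongr
        exact one_add_pow_le_inv_one_sub (by positivity) hexponent (by norm_num)
    _ ≤ 1 / 8 := by norm_num

lemma abs_Qk_sub_choose_le {k n : ℕ} (h : 2 ^ 32 * (k : ℝ) ^ 3 ≤ n ^ 2) :
    |Qk k n - (2 * n).choose k / 2 ^ k| ≤ (2 * n).choose k / 2 ^ k / 4 := by
  have hlinear : (65536 : ℝ) * k ≤ n := mul_natCast_le_of_mul_cube_le_sq (by linarith)
  have hkn : k ≤ n := by
    have : (k : ℝ) ≤ n := by linarith [k.cast_nonneg (α := ℝ)]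
    exact_mod_cast this
  have hr_le := saddleRadius_le hlinear
  have hr_sq := saddleRadius_sq k n
  set M : ℝ := (2 * n).choose k / 2 ^ k
  set r := saddleRadius k n
  have hr_ge : (4 * k : ℝ) ≤ n * r ^ 2 := by
    rw [hr_sq]
    rcases n.eq_zero_or_pos with rfl | hn
    · have hk : k = 0 := Nat.le_zero.1 hkn
      simp [hk]
    · rw [mul_div_cancel₀ _ (by positivity)]
  have hr_pow_pos : 0 < ((r : ℝ) ^ 2) ^ k := by
    rcases k.eq_zero_or_pos with rfl | hk
    · simp
    · have hn : 0 < n := hk.trans_le hkn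
      rw [hr_sq]
      positivity
  refine le_of_mul_le_mul_right ?_ hr_pow_pos
  calc |Qk k n - M| * ((r : ℝ) ^ 2) ^ k
      ≤ ((1 + 512 * ((r : ℝ) ^ 2) ^ 3) ^ n * (1 + 8 * r) - 1) * (2 * (M * ((r : ℝ) ^ 2) ^ k)) :=
        abs_Qk_sub_mul_pow_le (by linarith)
          fun i => bivariateSeminorm_diagonalSeries_pow_le hkn hr_ge
    _ ≤ 1 / 8 * (2 * (M * ((r : ℝ) ^ 2) ^ k)) := by
        gcongr
        exact saddleRadius_relative_error_le h hr_le
    _ = M / 4 * ((r : ℝ) ^ 2) ^ k := by ring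

end SaddlePoint

section ProductComparison

-- Squaring pairs the factor `j` with the factor `k - 1 - j`.
lemma prod_range_le_mul_of_mul_reflect_le {a b : ℕ → ℝ} {c D : ℝ} {k : ℕ}
    (ha : ∀ j < k, 0 ≤ a j * a (k - 1 - j))
    (hab : ∀ j < k, a j * a (k - 1 - j) ≤ c * (b j * b (k - 1 - j)))
    (hb : 0 ≤ ∏ j ∈ range k, b j) (hD : 0 ≤ D) (hcD : c ^ k ≤ D ^ 2) :
    ∏ j ∈ range k, a j ≤ D * ∏ j ∈ range k, b j := by
  have hsq (f : ℕ → ℝ) : (∏ j ∈ range k, f j) ^ 2 = ∏ j ∈ range k, f j * f (k - 1 - j) := by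
    rw [prod_mul_distrib, prod_range_reflect, sq]
  refine (abs_le_of_sq_le_sq' ?_ (mul_nonneg hD hb)).2
  calc (∏ j ∈ range k, a j) ^ 2 ≤ c ^ k * (∏ j ∈ range k, b j) ^ 2 := by
        rw [hsq, hsq, pow_eq_prod_const, ← prod_mul_distrib]
        exact prod_le_prod (fun j hj => ha j (mem_range.1 hj)) fun j hj => hab j (mem_range.1 hj)
    _ ≤ (D * ∏ j ∈ range k, b j) ^ 2 := by
        rw [mul_pow]
        gcongr

lemma mul_half_sub_comparable_mul_shift_sub {n k x y : ℝ} (hn : 0 < n) (hx : 0 ≤ x) (hy : 0 ≤ y)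
    (hxy : x + y = k - 1) (hk : 4 * k ≤ n) :
    (0 ≤ (n - x / 2) * (n - y / 2) ∧ 0 ≤ (n + k / 4 - x) * (n + k / 4 - y)) ∧
    (n - x / 2) * (n - y / 2) ≤
      (1 + (2 / n + 4 * k ^ 2 / n ^ 2)) * ((n + k / 4 - x) * (n + k / 4 - y)) ∧
    (n + k / 4 - x) * (n + k / 4 - y) ≤
      (1 + (2 / n + 4 * k ^ 2 / n ^ 2)) * ((n - x / 2) * (n - y / 2)) := by
  set A := (n - x / 2) * (n - y / 2) with hA
  set B := (n + k / 4 - x) * (n + k / 4 - y) with hB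
  set δ := 2 / n + 4 * k ^ 2 / n ^ 2 with hδ
  have hA_ge : n / 2 * (n / 2) ≤ A :=
    mul_le_mul (by linarith) (by linarith) (by positivity) (by linarith)
  have hB_ge : n / 2 * (n / 2) ≤ B :=
    mul_le_mul (by linarith) (by linarith) (by positivity) (by linarith)
  have hn_sq : 0 ≤ n / 2 * (n / 2) := by positivity
  have hδ_mul : δ * (n / 2 * (n / 2)) = n / 2 + k ^ 2 := by rw [hδ]; field_simp; ring
  have hδA := mul_le_mul_of_nonneg_left hA_ge (show 0 ≤ δ by positivity)
  have hδB := mul_le_mul_of_nonneg_left hB_ge (show 0 ≤ δ by positivity)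
  have hdiff : B - A = n / 2 + k ^ 2 / 16 - k * (k - 1) / 4 + 3 / 4 * (x * y) := by
    rw [hA, hB, show k = x + y + 1 by linarith]
    ring
  have hxy_nonneg : 0 ≤ x * y := mul_nonneg hx hy
  have hxy_le : x * y ≤ k ^ 2 := by
    rw [sq]
    exact mul_le_mul (by linarith) (by linarith) hy (by linarith)
  have hk_le_sq : k ≤ k ^ 2 := le_self_pow₀ (by linarith) two_ne_zero
  exact ⟨⟨hn_sq.trans hA_ge, hn_sq.trans hB_ge⟩, by linarith, by linarith⟩

lemma choose_div_two_pow_comparable_gbinom {n k : ℕ} (hkn : (4 : ℝ) * k ≤ n)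
    (hcube : 16 * (k : ℝ) ^ 3 ≤ n ^ 2) :
    ((2 * n).choose k : ℝ) / 2 ^ k ≤ 2 * gbinom (n + k / 4) k ∧
      gbinom (n + k / 4) k ≤ 2 * (((2 * n).choose k : ℝ) / 2 ^ k) := by
  set δ : ℝ := 2 / n + 4 * k ^ 2 / n ^ 2 with hδ
  have hkδ : k * δ ≤ 3 / 4 := by
    have hquot : (k : ℝ) / n ≤ 1 / 4 :=
      div_le_of_le_mul₀ n.cast_nonneg (by norm_num) (by linarith)
    have hcube_quot : (k : ℝ) ^ 3 / n ^ 2 ≤ 1 / 16 :=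
      div_le_of_le_mul₀ (by positivity) (by norm_num) (by linarith)
    calc k * δ = 2 * (k / n) + 4 * (k ^ 3 / n ^ 2) := by rw [hδ]; ring
      _ ≤ 3 / 4 := by linarith
  have hpow : (1 + δ) ^ k ≤ 2 ^ 2 := by
    refine (one_add_pow_le_inv_one_sub (by positivity) hkδ (by norm_num)).trans_eq ?_
    norm_num
  have hindex {j : ℕ} (hj : j < k) : (j : ℝ) + 1 ≤ k := by exact_mod_cast hj
  have hpair {j : ℕ} (hj : j < k) :=
    mul_half_sub_comparable_mul_shift_sub (n := n) (k := k) (x := j) (y := (k - 1 - j : ℕ))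
      (by linarith [hindex hj, j.cast_nonneg (α := ℝ)]) j.cast_nonneg (Nat.cast_nonneg _)
      (by rw [Nat.sub_sub, Nat.cast_sub (by lia)]; push_cast; ring) hkn
  have hnonneg :
      0 ≤ ∏ j ∈ range k, ((n : ℝ) - j / 2) ∧ 0 ≤ ∏ j ∈ range k, ((n : ℝ) + k / 4 - j) :=
    ⟨prod_nonneg fun j hj => by linarith [hindex (mem_range.1 hj), j.cast_nonneg (α := ℝ)],
      prod_nonneg fun j hj => by linarith [hindex (mem_range.1 hj), j.cast_nonneg (α := ℝ)]⟩
  rw [choose_div_two_pow_eq, gbinom, ← mul_div_assoc, ← mul_div_assoc]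
  constructor
  · gcongr
    exact prod_range_le_mul_of_mul_reflect_le (fun j hj => (hpair hj).1.1)
      (fun j hj => (hpair hj).2.1) hnonneg.2 zero_le_two hpow
  · gcongr
    exact prod_range_le_mul_of_mul_reflect_le (fun j hj => (hpair hj).1.2)
      (fun j hj => (hpair hj).2.2) hnonneg.1 zero_le_two hpow

end ProductComparison

lemma Qk_bounds_of_cube_le_sq {k n : ℕ} (h : 2 ^ 32 * (k : ℝ) ^ 3 ≤ n ^ 2) :
    1 / 4 * gbinom (n + k / 4) k ≤ Qk k n ∧ Qk k n ≤ 5 / 2 * gbinom (n + k / 4) k := by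
  have hcube : 0 ≤ (k : ℝ) ^ 3 := by positivity
  have hclose := abs_le.1 (abs_Qk_sub_choose_le h)
  have hcomparable := choose_div_two_pow_comparable_gbinom (n := n) (k := k)
    (mul_natCast_le_of_mul_cube_le_sq (by linarith)) (by linarith)
  constructor <;> linarith

lemma cube_le_sq_of_sq_lt_mul_sqrt {k n : ℕ} (h : (k : ℝ) ^ 2 < n * (√(k + 1) / 2 ^ 17)) :
    2 ^ 32 * (k : ℝ) ^ 3 ≤ n ^ 2 := by
  have hsq : (2 ^ 17 * (k : ℝ) ^ 2) ^ 2 ≤ n ^ 2 * (k + 1) := by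
    rw [← Real.sq_sqrt (show (0 : ℝ) ≤ k + 1 by positivity), ← mul_pow]
    exact pow_le_pow_left₀ (by positivity) (by linarith) 2
  rcases k.eq_zero_or_pos with rfl | hk
  · simp
  have hk1 : (1 : ℝ) ≤ k := by exact_mod_cast hk
  refine le_of_mul_le_mul_right ?_ (show (0 : ℝ) < k + 1 by positivity)
  calc 2 ^ 32 * (k : ℝ) ^ 3 * (k + 1) ≤ 2 ^ 32 * (k : ℝ) ^ 3 * (4 * k) := by
        gcongr
        linarith
    _ = (2 ^ 17 * (k : ℝ) ^ 2) ^ 2 := by ring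
    _ ≤ n ^ 2 * (k + 1) := hsq

theorem comparison :
    ∃ ψ : ℕ → ℝ, Monotone ψ ∧ Filter.Tendsto ψ Filter.atTop Filter.atTop ∧
      (∀ k : ℕ, 0 < ψ k) ∧ ∃ C > (0 : ℝ), ∀ k n : ℕ, (k : ℝ) ^ 2 < (n : ℝ) * ψ k →
        (1 / 4) * gbinom ((n : ℝ) + (k : ℝ) / 4) k ≤ Qk k n ∧
        Qk k n ≤ C * gbinom ((n : ℝ) + (k : ℝ) / 4) k := by
  refine ⟨fun k => √(k + 1) / 2 ^ 17, fun i j hij => ?_, ?_, fun k => by positivity, 5 / 2,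
    by norm_num, fun k n h => Qk_bounds_of_cube_le_sq (cube_le_sq_of_sq_lt_mul_sqrt h)⟩
  · dsimp only
    gcongr
  · exact (Real.tendsto_sqrt_atTop.comp <| Filter.tendsto_atTop_add_const_right _ 1
      tendsto_natCast_atTop_atTop).atTop_div_const (by positivity)
end
end

section
/- For all k, n ∈ ℕ: if n ≥ k then Q̃_k(n) ≤ 8·(32n)^k/k!, and if n < k then Q̃_k(n) ≤ 8·(32e)^k, where e is Euler's number. -/
open Finset

noncomputable section

/-- `Z̃_k(x,y) = 2^k Z_k(x/2, y/2)`. -/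
noncomputable def Ztilde (k : ℕ) (x y : ℝ) : ℂ := 2 ^ k * Z k (x / 2) (y / 2)

/-- `Q̃_k := Q_{Z̃_k}` (with `Z̃_k` restricted to ℤ²). -/
noncomputable def Qtilde (k : ℕ) (n : ℕ) : ℝ := Q (fun p => Ztilde k p.1 p.2) n

/-!
Up to the factor `m!`, `2 ^ m * F m (x / 2)` is the central factorial
`∏ j < m, (x + (m - 1) - 2 * j)`, which grows from `m` to `m + 2` by the factor
`x ^ 2 - (m + 1) ^ 2`. For `|x| ≥ m + 1` this factor is at most `x ^ 2`, and otherwise at most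
`(m + 1) * (m + 2)` in absolute value, so `|2 ^ m * F m (x / 2)| ≤ |x| ^ j / j!` for some
`j ≤ m`; hence it is at most `exp (t * |x|) / t ^ m` for every `t ∈ (0, 1]`. Summing over `l`
bounds `‖Ztilde k x y‖ ^ 2` by a multiple of `cosh (2 * t * x) * cosh (2 * t * y)`. The latter
is an eigenfunction of the averaging operator of the walk, with eigenvalue
`cosh (2 * t) ≤ exp (2 * t ^ 2)`, so its expectation at time `n` is `cosh (2 * t) ^ n`. The
theorem follows with `t ^ 2 = k / (2 * n)`, respectively `t = 1`.
-/

section CentralFactorial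

/-- The central factorial of `x` with `m` factors, spaced by `2` rather than by the usual `1`: this
is `m! * 2 ^ m * F m (x / 2)`, with the halves cleared. -/
def centralFactorial {R : Type*} [CommRing R] (m : ℕ) (x : R) : R :=
  ∏ j ∈ range m, (x + ((m : R) - 1) - 2 * j)

lemma centralFactorial_add_two {R : Type*} [CommRing R] (m : ℕ) (x : R) :
    centralFactorial (m + 2) x = centralFactorial m x * (x ^ 2 - ((m : R) + 1) ^ 2) := by
  have inner : ∏ j ∈ range m, (x + (((m + 2 : ℕ) : R) - 1) - 2 * ((j + 1 : ℕ) : R)) =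
      centralFactorial m x :=
    prod_congr rfl fun j _ => by push_cast; ring
  rw [centralFactorial, prod_range_succ, prod_range_succ', inner]
  push_cast
  ring

lemma abs_centralFactorial_le_pow {R : Type*} [CommRing R] [LinearOrder R] [IsStrictOrderedRing R] :
    ∀ (m : ℕ) (x : R), (m : R) - 1 ≤ |x| → |centralFactorial m x| ≤ |x| ^ m
  | 0, x, _ => by simp [centralFactorial]
  | 1, x, _ => by simp [centralFactorial]
  | m + 2, x, hx => by
    push_cast at hx
    have : (0 : R) ≤ m := m.cast_nonneg
    have hsq : ((m : R) + 1) ^ 2 ≤ x ^ 2 :=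
      sq_abs x ▸ pow_le_pow_left₀ (by linarith) (by linarith) 2
    have hfactor : |x ^ 2 - ((m : R) + 1) ^ 2| ≤ |x| ^ 2 := by
      rw [sq_abs, abs_of_nonneg (sub_nonneg.2 hsq)]
      exact sub_le_self _ (sq_nonneg _)
    rw [centralFactorial_add_two, abs_mul, pow_add]
    exact mul_le_mul (abs_centralFactorial_le_pow m x (by linarith)) hfactor (abs_nonneg _)
      (by positivity)

lemma abs_centralFactorial_add_two_le {R : Type*} [CommRing R] [LinearOrder R]
    [IsStrictOrderedRing R] {m : ℕ} {x : R} (hx : |x| ≤ m + 1) :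
    |centralFactorial (m + 2) x| ≤ ((m : R) + 2) * (m + 1) * |centralFactorial m x| := by
  have : (0 : R) ≤ m := m.cast_nonneg
  have hsq : x ^ 2 ≤ ((m : R) + 1) ^ 2 := sq_abs x ▸ pow_le_pow_left₀ (abs_nonneg x) hx 2
  have hfactor : |x ^ 2 - ((m : R) + 1) ^ 2| ≤ ((m : R) + 2) * (m + 1) := by
    rw [abs_le]
    constructor <;> nlinarith [sq_nonneg x]
  rw [centralFactorial_add_two, abs_mul, mul_comm]
  gcongr

lemma exists_abs_centralFactorial_div_factorial_le {K : Type*} [Field K] [LinearOrder K]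
    [IsStrictOrderedRing K] :
    ∀ (m : ℕ) (x : K), ∃ j ≤ m, |centralFactorial m x| / m.factorial ≤ |x| ^ j / j.factorial
  | 0, x => ⟨0, le_rfl, by simp [centralFactorial]⟩
  | 1, x => ⟨1, le_rfl, by simp [centralFactorial]⟩
  | m + 2, x => by
    obtain hx | hx := le_total ((m : K) + 1) |x|
    · refine ⟨m + 2, le_rfl, ?_⟩
      gcongr
      exact abs_centralFactorial_le_pow (m + 2) x (by push_cast; linarith)
    · obtain ⟨j, hj, hle⟩ := exists_abs_centralFactorial_div_factorial_le m x
      have hfact : ((m + 2).factorial : K) = ((m : K) + 2) * (m + 1) * m.factorial := by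
        rw [Nat.factorial_succ, Nat.factorial_succ]
        push_cast
        ring
      refine ⟨j, by omega, le_trans ?_ hle⟩
      rw [hfact, ← mul_div_mul_left |centralFactorial m x| (m.factorial : K)
        (by positivity : ((m : K) + 2) * (m + 1) ≠ 0)]
      gcongr
      exact abs_centralFactorial_add_two_le hx

lemma abs_centralFactorial_div_factorial_le_exp {t : ℝ} (ht : 0 < t) (ht1 : t ≤ 1) (m : ℕ) (x : ℝ) :
    |centralFactorial m x| / m.factorial ≤ Real.exp (t * |x|) / t ^ m := by
  obtain ⟨j, hj, hle⟩ := exists_abs_centralFactorial_div_factorial_le m x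
  calc |centralFactorial m x| / m.factorial
      ≤ |x| ^ j / j.factorial := hle
    _ = (t * |x|) ^ j / j.factorial / t ^ j := by
      rw [mul_pow]
      field_simp
    _ ≤ Real.exp (t * |x|) / t ^ m :=
      div_le_div₀ (by positivity) (Real.pow_div_factorial_le_exp _ (by positivity) j)
        (by positivity) (pow_le_pow_of_le_one ht.le ht1 hj)

end CentralFactorial

section Ztilde

lemma two_pow_mul_F_half (m : ℕ) (x : ℝ) :
    2 ^ m * F m (x / 2) = centralFactorial m x / m.factorial := by
  have hpow : (2 : ℝ) ^ m = ∏ _j ∈ range m, 2 := by simp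
  rw [F, gbinom, centralFactorial, ← mul_div_assoc, hpow, ← prod_mul_distrib]
  congr 1
  exact prod_congr rfl fun j _ => by ring

lemma Ztilde_eq_sum (k : ℕ) (x y : ℝ) :
    Ztilde k x y = ∑ l ∈ range (k + 1), Complex.I ^ l *
      ((2 ^ (k - l) * F (k - l) (x / 2) : ℝ) : ℂ) * ((2 ^ l * F l (y / 2) : ℝ) : ℂ) := by
  rw [Ztilde, Z, mul_sum]
  refine sum_congr rfl fun l hl => ?_
  rw [← Nat.sub_add_cancel (mem_range_succ_iff.1 hl), pow_add, Nat.add_sub_cancel]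
  push_cast
  ring

variable {t : ℝ} (ht : 0 < t) (ht1 : t ≤ 1) (k : ℕ)
include ht ht1

lemma abs_two_pow_mul_F_half_le (m : ℕ) (x : ℝ) :
    |2 ^ m * F m (x / 2)| ≤ Real.exp (t * |x|) / t ^ m := by
  rw [two_pow_mul_F_half, abs_div, Nat.abs_cast]
  exact abs_centralFactorial_div_factorial_le_exp ht ht1 m x

lemma norm_Ztilde_le (x y : ℝ) :
    ‖Ztilde k x y‖ ≤ (k + 1) * (Real.exp (t * (|x| + |y|)) / t ^ k) := by
  have term_le : ∀ l ∈ range (k + 1), ‖Complex.I ^ l *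
      ((2 ^ (k - l) * F (k - l) (x / 2) : ℝ) : ℂ) * ((2 ^ l * F l (y / 2) : ℝ) : ℂ)‖ ≤
      Real.exp (t * (|x| + |y|)) / t ^ k := fun l hl => by
    have hpow : t ^ k = t ^ (k - l) * t ^ l := by
      rw [← pow_add, Nat.sub_add_cancel (mem_range_succ_iff.1 hl)]
    rw [norm_mul, norm_mul, norm_pow, Complex.norm_I, one_pow, one_mul, Complex.norm_real,
      Complex.norm_real, hpow, mul_add, Real.exp_add, ← div_mul_div_comm]
    exact mul_le_mul (abs_two_pow_mul_F_half_le ht ht1 _ x) (abs_two_pow_mul_F_half_le ht ht1 _ y)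
      (norm_nonneg _) (by positivity)
  rw [Ztilde_eq_sum]
  simpa using norm_sum_le_of_le _ term_le

lemma sq_norm_Ztilde_le (x y : ℝ) :
    ‖Ztilde k x y‖ ^ 2 ≤
      4 * (4 / t ^ 2) ^ k * (Real.cosh (2 * t * x) * Real.cosh (2 * t * y)) := by
  have hk : (k : ℝ) + 1 ≤ 2 ^ k := mod_cast (Nat.lt_two_pow_self : k < 2 ^ k)
  have exp_le (z : ℝ) : Real.exp (2 * t * |z|) ≤ 2 * Real.cosh (2 * t * z) := by
    have h := Real.exp_abs_le (2 * t * z)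
    rw [abs_mul, abs_of_pos (by positivity : 0 < 2 * t)] at h
    rw [Real.cosh_eq]
    linarith
  calc ‖Ztilde k x y‖ ^ 2
      ≤ (2 ^ k * (Real.exp (t * (|x| + |y|)) / t ^ k)) ^ 2 := by
        gcongr
        exact (norm_Ztilde_le ht ht1 k x y).trans (by gcongr)
    _ = (4 / t ^ 2) ^ k * (Real.exp (2 * t * |x|) * Real.exp (2 * t * |y|)) := by
        rw [mul_pow, div_pow, ← Real.exp_nat_mul, ← Real.exp_add, div_pow, ← pow_mul, ← pow_mul,
          mul_comm k, pow_mul, pow_mul]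
        push_cast
        ring_nf
    _ ≤ (4 / t ^ 2) ^ k * ((2 * Real.cosh (2 * t * x)) * (2 * Real.cosh (2 * t * y))) := by
        gcongr <;> exact exp_le _
    _ = 4 * (4 / t ^ 2) ^ k * (Real.cosh (2 * t * x) * Real.cosh (2 * t * y)) := by ring

end Ztilde

section Walk

lemma sum_piFinset_snoc {n : ℕ} {α : Fin (n + 1) → Type*} {R : Type*} [AddCommMonoid R]
    (S : ∀ i, Finset (α i)) (g : (∀ i, α i) → R) :
    ∑ s ∈ Fintype.piFinset S, g s =
      ∑ s ∈ Fintype.piFinset fun i : Fin n => S i.castSucc, ∑ a ∈ S (Fin.last n),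
        g (Fin.snoc (α := α) s a) := by
  rw [← sum_product_right']
  refine sum_equiv (Fin.snocEquiv α).symm (fun s => ?_) fun s _ => ?_
  · rw [Fin.mem_piFinset_iff_last_init, mem_product]
    rfl
  · exact congrArg g ((Fin.snocEquiv α).apply_symm_apply s).symm

lemma sum_piFinset_of_eigenfunction {M R : Type*} [AddCommMonoid M] [Semiring R] {S : Finset M}
    {f : M → R} {c : R} (hf : ∀ p, ∑ a ∈ S, f (p + a) = c * f p) (n : ℕ) :
    ∑ s ∈ Fintype.piFinset (fun _ : Fin n => S), f (∑ i, s i) = c ^ n * f 0 := by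
  induction n with
  | zero => simp
  | succ n ih =>
    rw [sum_piFinset_snoc]
    simp only [Fin.sum_univ_castSucc, Fin.snoc_castSucc, Fin.snoc_last, hf]
    rw [← mul_sum, ih, pow_succ', mul_assoc]

lemma Q_le_of_eigenfunction {u : ℤ × ℤ → ℂ} {f : ℤ × ℤ → ℝ} {c : ℝ} (hu : ∀ p, ‖u p‖ ^ 2 ≤ f p)
    (hf : ∀ p, ∑ a ∈ Sfin, f (p + a) = 4 * c * f p) (n : ℕ) : Q u n ≤ c ^ n * f 0 :=
  calc Q u n
      ≤ (4 : ℝ)⁻¹ ^ n * ∑ s ∈ Fintype.piFinset (fun _ : Fin n => Sfin), f (∑ i, s i) := by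
        rw [Q]
        gcongr
        exact hu _
    _ = c ^ n * f 0 := by
        rw [sum_piFinset_of_eigenfunction hf, ← mul_assoc, ← mul_pow,
          inv_mul_cancel_left₀ four_ne_zero]

lemma sum_Sfin_cosh_mul_cosh (a b : ℝ) (p : ℤ × ℤ) :
    ∑ s ∈ Sfin, Real.cosh (a * (p + s).1) * Real.cosh (b * (p + s).2) =
      2 * (Real.cosh a + Real.cosh b) * (Real.cosh (a * p.1) * Real.cosh (b * p.2)) := by
  rw [Sfin, sum_insert (by decide), sum_insert (by decide), sum_insert (by decide), sum_singleton]
  simp only [Prod.fst_add, Prod.snd_add, Int.cast_add, Int.cast_neg, Int.cast_one,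
    mul_add, mul_neg, mul_one, add_zero, Real.cosh_add, Real.cosh_neg, Real.sinh_neg]
  ring

end Walk

section Qtilde

lemma Qtilde_le_mul_exp {s : ℝ} (hs : 0 < s) (hs1 : s ≤ 1) (k n : ℕ) :
    Qtilde k n ≤ 4 * (4 / s) ^ k * Real.exp (2 * s * n) := by
  set t := √s
  have ht : t ^ 2 = s := Real.sq_sqrt hs.le
  have eigen (p : ℤ × ℤ) :
      ∑ a ∈ Sfin, 4 * (4 / s) ^ k *
        (Real.cosh (2 * t * (p + a).1) * Real.cosh (2 * t * (p + a).2)) =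
      4 * Real.cosh (2 * t) *
        (4 * (4 / s) ^ k * (Real.cosh (2 * t * p.1) * Real.cosh (2 * t * p.2))) := by
    rw [← mul_sum, sum_Sfin_cosh_mul_cosh]
    ring
  calc Qtilde k n
      ≤ Real.cosh (2 * t) ^ n * (4 * (4 / s) ^ k *
          (Real.cosh (2 * t * (0 : ℤ × ℤ).1) * Real.cosh (2 * t * (0 : ℤ × ℤ).2))) :=
        Q_le_of_eigenfunction (fun p => ht ▸
          sq_norm_Ztilde_le (Real.sqrt_pos.2 hs) (Real.sqrt_le_one.2 hs1) k p.1 p.2) eigen n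
    _ = Real.cosh (2 * t) ^ n * (4 * (4 / s) ^ k) := by simp
    _ ≤ Real.exp ((2 * t) ^ 2 / 2) ^ n * (4 * (4 / s) ^ k) := by
        gcongr
        exact Real.cosh_le_exp_half_sq _
    _ = 4 * (4 / s) ^ k * Real.exp (2 * s * n) := by
        rw [mul_comm, ← Real.exp_nat_mul, mul_pow, ht]
        ring_nf

lemma Qtilde_zero (n : ℕ) : Qtilde 0 n = 1 := by
  simp [Qtilde, Q, Ztilde, Z, F, gbinom, Sfin]

lemma Qtilde_le_div_pow_self {k n : ℕ} (hkn : k ≤ 2 * n) :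
    Qtilde k n ≤ 4 * (8 * Real.exp 1 * n) ^ k / k ^ k := by
  obtain rfl | hk := k.eq_zero_or_pos
  · norm_num [Qtilde_zero]
  have hn : 0 < n := by omega
  have hexp : Real.exp (2 * (k / (2 * n)) * n) = Real.exp 1 ^ k := by
    rw [← Real.exp_nat_mul]
    congr 1
    field_simp
  calc Qtilde k n
      ≤ 4 * (4 / (k / (2 * n))) ^ k * Real.exp (2 * (k / (2 * n)) * n) :=
        Qtilde_le_mul_exp (by positivity)
          ((div_le_one (by positivity)).2 (mod_cast hkn)) k n
    _ = 4 * (8 * Real.exp 1 * n) ^ k / k ^ k := by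
        rw [hexp, mul_assoc, ← mul_pow, mul_div_assoc, ← div_pow]
        congr 2
        field_simp
        norm_num

end Qtilde

theorem Qtilde_rough_bound (k n : ℕ) :
    (k ≤ n → Qtilde k n ≤ 8 * (32 * (n : ℝ)) ^ k / (Nat.factorial k : ℝ)) ∧
    (n < k → Qtilde k n ≤ 8 * (32 * Real.exp 1) ^ k) := by
  have exp_le : Real.exp 1 ≤ 4 := by linarith [Real.exp_one_lt_three]
  refine ⟨fun hkn => ?_, fun hnk => ?_⟩
  · calc Qtilde k n
        ≤ 4 * (8 * Real.exp 1 * n) ^ k / k ^ k := Qtilde_le_div_pow_self (by omega)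
      _ ≤ 8 * (32 * n) ^ k / k.factorial := by
        gcongr
        · norm_num
        · linarith
        · exact mod_cast k.factorial_le_pow
  · calc Qtilde k n
        ≤ 4 * (4 / 1) ^ k * Real.exp (2 * 1 * n) := Qtilde_le_mul_exp one_pos le_rfl k n
      _ ≤ 4 * 4 ^ k * Real.exp (k * (1 + 1)) := by
        have : (n : ℝ) ≤ k := mod_cast hnk.le
        gcongr ?_ * Real.exp ?_
        · norm_num
        · linarith
      _ = 4 * (4 * Real.exp 1 * Real.exp 1) ^ k := by
        rw [Real.exp_nat_mul, Real.exp_add, mul_assoc, ← mul_pow, ← mul_assoc]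
      _ ≤ 8 * (32 * Real.exp 1) ^ k := by
        gcongr
        · norm_num
        · linarith
end
end
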